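/- arXiv:2409.06465 — 2 statements merged into one kernel-verified Lean document; each statement's English description precedes it below -/
import Mathlib

section
/- Let {X_n}_n be a sequence of Hermitian matrices with X_n of order d_n, d_n → ∞, and let f : Ω → ℂ^{s×s} be measurable on a measurable set Ω ⊆ ℝ^ℓ with 0 < m_ℓ(Ω) < ∞. For each n let P_n ∈ ℂ^{d_n×d_n'} be a compression matrix with d_n' < d_n and P_n* P_n = I_{d_n'}, and set Y_{d_n'} = P_n* X_n P_n. If lim_{n→∞} d_n'/d_n = 1, then {X_n}_n ∼_λ f if and only if {Y_{d_n'}}_n ∼_λ f. -/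
open MeasureTheory Filter Topology Matrix
open scoped Real

noncomputable section

/-- Sum of `F` over the eigenvalues (with multiplicity) of a square complex matrix,
the eigenvalues being the roots of the characteristic polynomial. -/
def eigSum {ι : Type*} [Fintype ι] [DecidableEq ι] (F : ℂ → ℂ) (A : Matrix ι ι ℂ) : ℂ :=
  (A.charpoly.roots.map F).sum

/-- Sum of `F` over the singular values `σ_1, …, σ_{min(#rows,#cols)}` of a rectangular
complex matrix: the singular values are the square roots of the eigenvalues of `A * Aᴴ`,
discarding the `#rows - min(#rows,#cols)` superfluous zero ones. -/
def svSum {m n : Type*} [Fintype m] [Fintype n] [DecidableEq m]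
    (F : ℝ → ℂ) (A : Matrix m n ℂ) : ℂ :=
  (∑ i, F (Real.sqrt ((Matrix.isHermitian_mul_conjTranspose_self A).eigenvalues i))) -
    ((Fintype.card m - min (Fintype.card m) (Fintype.card n) : ℕ) : ℂ) * F 0

/-- `{A_n}_n ∼_σ f` : the matrix-sequence `A` is distributed as the matrix-valued
symbol `f : Ω → ℂ^{ρ×τ}` in the sense of the singular values (Weyl sense). -/
def DistributedSV {Θ : Type*} [MeasureSpace Θ] (Ω : Set Θ)
    {ρ τ : Type*} [Fintype ρ] [Fintype τ] [DecidableEq ρ]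
    (f : Θ → Matrix ρ τ ℂ)
    {ι κ : ℕ → Type} [∀ n, Fintype (ι n)] [∀ n, Fintype (κ n)] [∀ n, DecidableEq (ι n)]
    (A : ∀ n, Matrix (ι n) (κ n) ℂ) : Prop :=
  ∀ F : ℝ → ℂ, Continuous F → HasCompactSupport F →
    Tendsto
      (fun n => ((min (Fintype.card (ι n)) (Fintype.card (κ n)) : ℕ) : ℂ)⁻¹ * svSum F (A n))
      atTop
      (𝓝 (((volume Ω).toReal : ℂ)⁻¹ *
        ∫ θ in Ω, ((min (Fintype.card ρ) (Fintype.card τ) : ℕ) : ℂ)⁻¹ * svSum F (f θ)))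

/-- `{A_n}_n ∼_λ f` : the matrix-sequence `A` is distributed as the matrix-valued
symbol `f : Ω → ℂ^{ρ×ρ}` in the sense of the eigenvalues (Weyl sense). -/
def DistributedEig {Θ : Type*} [MeasureSpace Θ] (Ω : Set Θ)
    {ρ : Type*} [Fintype ρ] [DecidableEq ρ]
    (f : Θ → Matrix ρ ρ ℂ)
    {ι : ℕ → Type} [∀ n, Fintype (ι n)] [∀ n, DecidableEq (ι n)]
    (A : ∀ n, Matrix (ι n) (ι n) ℂ) : Prop :=
  ∀ F : ℂ → ℂ, Continuous F → HasCompactSupport F →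
    Tendsto (fun n => ((Fintype.card (ι n) : ℕ) : ℂ)⁻¹ * eigSum F (A n)) atTop
      (𝓝 (((volume Ω).toReal : ℂ)⁻¹ *
        ∫ θ in Ω, ((Fintype.card ρ : ℕ) : ℂ)⁻¹ * eigSum F (f θ)))

/-- `{A_n}_n ∼_σ α I` (constant symbol `α I_s`, `α = 0` being the notion of a
zero-distributed matrix-sequence): the limit of the singular value averages is `F(α)`. -/
def DistributedSVConst (α : ℝ)
    {ι κ : ℕ → Type} [∀ n, Fintype (ι n)] [∀ n, Fintype (κ n)] [∀ n, DecidableEq (ι n)]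
    (A : ∀ n, Matrix (ι n) (κ n) ℂ) : Prop :=
  ∀ F : ℝ → ℂ, Continuous F → HasCompactSupport F →
    Tendsto
      (fun n => ((min (Fintype.card (ι n)) (Fintype.card (κ n)) : ℕ) : ℂ)⁻¹ * svSum F (A n))
      atTop (𝓝 (F α))

/-- `{A_n}_n ∼_λ α I` (constant symbol `α I_s`, `α` real): the limit of the eigenvalue
averages is `F(α)`. -/
def DistributedEigConst (α : ℝ)
    {ι : ℕ → Type} [∀ n, Fintype (ι n)] [∀ n, DecidableEq (ι n)]
    (A : ∀ n, Matrix (ι n) (ι n) ℂ) : Prop :=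
  ∀ F : ℂ → ℂ, Continuous F → HasCompactSupport F →
    Tendsto (fun n => ((Fintype.card (ι n) : ℕ) : ℂ)⁻¹ * eigSum F (A n)) atTop
      (𝓝 (F (α : ℂ)))

/-- The `k`-th Fourier coefficient (computed entrywise) of a matrix-valued function on
`[-π, π]`: `f̂_k = (1/2π) ∫_{-π}^{π} f(θ) e^{-ικθ} dθ`. -/
def fCoeff {ρ τ : Type*} (f : ℝ → Matrix ρ τ ℂ) (k : ℤ) : Matrix ρ τ ℂ :=
  Matrix.of fun a b =>
    ((2 * π : ℝ) : ℂ)⁻¹ *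
      ∫ θ in (-π : ℝ)..π, f θ a b * Complex.exp (-(Complex.I * (k : ℂ) * (θ : ℂ)))

/-- The (rectangular) block Toeplitz matrix `T_{n,n'}(f) = [f̂_{i-j}]`, of size
`sn × tn'` when `f` is `s × t` matrix-valued. -/
def blockToeplitz {ρ τ : Type*} (f : ℝ → Matrix ρ τ ℂ) (n n' : ℕ) :
    Matrix (Fin n × ρ) (Fin n' × τ) ℂ :=
  Matrix.of fun p q => fCoeff f (((p.1 : ℕ) : ℤ) - ((q.1 : ℕ) : ℤ)) p.2 q.2

/-!
The comparison rests on Cauchy interlacing, in counting form. If `y ≠ 0` lies in the span of the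
eigenvectors of `Pᴴ A P` with eigenvalue at most `t`, then `P y` cannot lie in the span of those
of `A` with eigenvalue above `t`, since the two quadratic forms agree along `P`; comparing
dimensions, and exchanging the two sides of `t`, shows that the eigenvalue counting functions of
`A` and `Pᴴ A P` differ by at most `d - d'` everywhere. A continuous compactly supported test
function is uniformly within `ε` of a fixed step function, whose eigenvalue sums therefore differ
by `O(d - d')`. Dividing by `d`, the difference of the means is `O(ε) + o(1)`.
-/

section Compression

variable {𝕜 E G ι κ : Type*} [RCLike 𝕜] [Fintype ι] [Fintype κ]
  [NormedAddCommGroup E] [InnerProductSpace 𝕜 E] [NormedAddCommGroup G] [InnerProductSpace 𝕜 G]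

open scoped InnerProductSpace

/-- The counting function of a finite real family, i.e. its unnormalised empirical distribution
function; for the eigenvalues of a Hermitian matrix it is the eigenvalue counting function. -/
def countLE (a : ι → ℝ) (t : ℝ) : ℕ := Finset.card {i | a i ≤ t}

theorem countLE_add_card_filter_lt (a : ι → ℝ) (t : ℝ) :
    countLE a t + Finset.card {i | t < a i} = Fintype.card ι := by
  simpa [countLE] using Finset.card_filter_add_card_filter_not (s := .univ) fun i ↦ a i ≤ t

theorem inner_eq_zero_of_mem_span_image (v : OrthonormalBasis ι 𝕜 E) {s : Set ι} {x : E}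
    (hx : x ∈ Submodule.span 𝕜 (v '' s)) {i : ι} (hi : i ∉ s) : ⟪v i, x⟫_𝕜 = 0 := by
  rw [← v.coe_toBasis, v.toBasis.mem_span_image] at hx
  by_contra h
  exact hi (hx (by simpa [v.repr_apply_apply] using h))

theorem re_inner_apply_sub_eq_sum {T : E →ₗ[𝕜] E} {v : OrthonormalBasis ι 𝕜 E} {a : ι → ℝ}
    (hv : ∀ i, T (v i) = (a i : 𝕜) • v i) (t : ℝ) (x : E) :
    RCLike.re ⟪x, T x⟫_𝕜 - t * ‖x‖ ^ 2 = ∑ i, (a i - t) * ‖⟪v i, x⟫_𝕜‖ ^ 2 := by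
  have hT : T x = ∑ i, ⟪v i, x⟫_𝕜 • (a i : 𝕜) • v i := by
    conv_lhs => rw [← v.sum_repr' x]
    simp only [map_sum, map_smul, hv]
  have hxT : ⟪x, T x⟫_𝕜 = ((∑ i, a i * ‖⟪v i, x⟫_𝕜‖ ^ 2 : ℝ) : 𝕜) := by
    rw [hT, inner_sum]
    push_cast
    refine Finset.sum_congr rfl fun i _ ↦ ?_
    rw [inner_smul_right, inner_smul_right, ← inner_conj_symm x, ← RCLike.mul_conj]
    ring
  rw [hxT, RCLike.ofReal_re, ← v.sum_sq_norm_inner_right x, Finset.mul_sum,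
    ← Finset.sum_sub_distrib]
  simp only [sub_mul]

theorem re_inner_apply_le_of_mem_span {T : E →ₗ[𝕜] E} {v : OrthonormalBasis ι 𝕜 E} {a : ι → ℝ}
    (hv : ∀ i, T (v i) = (a i : 𝕜) • v i) {t : ℝ} {x : E}
    (hx : x ∈ Submodule.span 𝕜 (v '' {i | a i ≤ t})) :
    RCLike.re ⟪x, T x⟫_𝕜 ≤ t * ‖x‖ ^ 2 := by
  rw [← sub_nonpos, re_inner_apply_sub_eq_sum hv]
  refine Finset.sum_nonpos fun i _ ↦ ?_
  by_cases hi : a i ≤ t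
  · exact mul_nonpos_of_nonpos_of_nonneg (sub_nonpos.2 hi) (by positivity)
  · simp [inner_eq_zero_of_mem_span_image v hx hi]

theorem lt_re_inner_apply_of_mem_span {T : E →ₗ[𝕜] E} {v : OrthonormalBasis ι 𝕜 E} {a : ι → ℝ}
    (hv : ∀ i, T (v i) = (a i : 𝕜) • v i) {t : ℝ} {x : E}
    (hx : x ∈ Submodule.span 𝕜 (v '' {i | t < a i})) (hx0 : x ≠ 0) :
    t * ‖x‖ ^ 2 < RCLike.re ⟪x, T x⟫_𝕜 := by
  rw [← sub_pos, re_inner_apply_sub_eq_sum hv]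
  obtain ⟨j, hj⟩ : ∃ j, ⟪v j, x⟫_𝕜 ≠ 0 := by
    by_contra! h
    exact hx0 (by simpa [h] using (v.sum_repr' x).symm)
  have hvanish {i : ι} (hi : ¬ t < a i) := inner_eq_zero_of_mem_span_image v hx hi
  refine Finset.sum_pos' (fun i _ ↦ ?_) ⟨j, Finset.mem_univ j, ?_⟩
  · by_cases hi : t < a i
    · exact mul_nonneg (sub_pos.2 hi).le (by positivity)
    · simp [hvanish hi]
  · have : t < a j := not_imp_comm.1 hvanish hj
    exact mul_pos (sub_pos.2 this) (by positivity)

variable [FiniteDimensional 𝕜 E]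

theorem card_filter_add_card_filter_le_finrank {P : G →ₗ[𝕜] E} (hP : Function.Injective P)
    {v : ι → E} (hv : LinearIndependent 𝕜 v) {w : κ → G} (hw : LinearIndependent 𝕜 w)
    {p : ι → Prop} {q : κ → Prop} [DecidablePred p] [DecidablePred q]
    (h : ∀ y ∈ Submodule.span 𝕜 (w '' {k | q k}), P y ∈ Submodule.span 𝕜 (v '' {i | p i}) →
      y = 0) :
    Finset.card {i | p i} + Finset.card {k | q k} ≤ Module.finrank 𝕜 E := by
  have hPw : LinearIndependent 𝕜 (P ∘ w) := hw.map' P (LinearMap.ker_eq_bot.2 hP)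
  have hd : Disjoint (Submodule.span 𝕜 (v '' {i | p i}))
      (Submodule.span 𝕜 ((P ∘ w) '' {k | q k})) := by
    rw [Set.image_comp, ← Submodule.map_span, Submodule.disjoint_def]
    rintro _ hx ⟨y, hy, rfl⟩
    rw [h y hy hx, map_zero]
  rw [Set.image_eq_range, Set.image_eq_range] at hd
  have := ((hv.comp _ Subtype.val_injective).sum_type
    (hPw.comp _ Subtype.val_injective) hd).fintype_card_le_finrank
  simpa [Fintype.card_subtype] using this

variable [FiniteDimensional 𝕜 G]

theorem norm_apply_of_adjoint_comp_self {P : G →ₗ[𝕜] E} (hP : P.adjoint ∘ₗ P = .id) (y : G) :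
    ‖P y‖ = ‖y‖ := by
  refine (LinearMap.norm_map_iff_inner_map_map P).2 (fun x y ↦ ?_) y
  rw [← LinearMap.adjoint_inner_right, ← LinearMap.comp_apply, hP, LinearMap.id_apply]

theorem countLE_adjoint_comp_comp {T : E →ₗ[𝕜] E} {P : G →ₗ[𝕜] E} (hP : P.adjoint ∘ₗ P = .id)
    {v : OrthonormalBasis ι 𝕜 E} {a : ι → ℝ} (hv : ∀ i, T (v i) = (a i : 𝕜) • v i)
    {w : OrthonormalBasis κ 𝕜 G} {b : κ → ℝ}
    (hw : ∀ k, (P.adjoint ∘ₗ T ∘ₗ P) (w k) = (b k : 𝕜) • w k) (t : ℝ) :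
    countLE b t ≤ countLE a t ∧ countLE a t + Fintype.card κ ≤ countLE b t + Fintype.card ι := by
  have hnorm := norm_apply_of_adjoint_comp_self hP
  have hform (y : G) : ⟪y, (P.adjoint ∘ₗ T ∘ₗ P) y⟫_𝕜 = ⟪P y, T (P y)⟫_𝕜 :=
    P.adjoint_inner_right y (T (P y))
  have hinj : Function.Injective P := LinearMap.injective_of_comp_eq_id _ _ hP
  have hv' := v.orthonormal.linearIndependent
  have hw' := w.orthonormal.linearIndependent
  have hle : Finset.card {i | t < a i} + countLE b t ≤ Module.finrank 𝕜 E := by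
    refine card_filter_add_card_filter_le_finrank hinj hv' hw' fun y hy hPy ↦ ?_
    by_contra hy0
    have := lt_re_inner_apply_of_mem_span hv hPy ((map_ne_zero_iff P hinj).2 hy0)
    rw [hnorm, ← hform] at this
    exact this.not_ge (re_inner_apply_le_of_mem_span hw hy)
  have hgt : countLE a t + Finset.card {k | t < b k} ≤ Module.finrank 𝕜 E := by
    refine card_filter_add_card_filter_le_finrank hinj hv' hw' fun y hy hPy ↦ ?_
    by_contra hy0
    have := lt_re_inner_apply_of_mem_span hw hy hy0
    rw [hform, ← hnorm] at this
    exact this.not_ge (re_inner_apply_le_of_mem_span hv hPy)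
  rw [Module.finrank_eq_card_basis v.toBasis] at hle hgt
  have ha := countLE_add_card_filter_lt a t
  have hb := countLE_add_card_filter_lt b t
  omega

end Compression

section Matrix

variable {𝕜 n m : Type*} [RCLike 𝕜] [Fintype n] [Fintype m] [DecidableEq n] [DecidableEq m]

theorem toLpLin_eigenvectorBasis_apply {A : Matrix n n 𝕜} (hA : A.IsHermitian) (i : n) :
    A.toLpLin 2 2 (hA.eigenvectorBasis i) = (hA.eigenvalues i : 𝕜) • hA.eigenvectorBasis i := by
  ext j
  simpa [RCLike.real_smul_eq_coe_mul] using congrFun (hA.mulVec_eigenvectorBasis i) j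

theorem abs_countLE_eigenvalues_sub_le {A : Matrix n n 𝕜} (hA : A.IsHermitian)
    {P : Matrix n m 𝕜} (hP : Pᴴ * P = 1) (t : ℝ) :
    |(countLE hA.eigenvalues t : ℝ) -
        countLE (isHermitian_conjTranspose_mul_mul P hA).eigenvalues t| ≤
      Fintype.card n - Fintype.card m := by
  set hB := isHermitian_conjTranspose_mul_mul P hA
  have hP' : (P.toLpLin 2 2).adjoint ∘ₗ P.toLpLin 2 2 = .id := by
    rw [← toEuclideanLin_conjTranspose_eq_adjoint, ← toLpLin_mul, hP, toLpLin_one]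
  have hcomp : (P.toLpLin 2 2).adjoint ∘ₗ A.toLpLin 2 2 ∘ₗ P.toLpLin 2 2 =
      (Pᴴ * A * P).toLpLin 2 2 := by
    rw [← toEuclideanLin_conjTranspose_eq_adjoint, ← toLpLin_mul, ← toLpLin_mul, Matrix.mul_assoc]
  obtain ⟨hle, hge⟩ := countLE_adjoint_comp_comp hP' (toLpLin_eigenvectorBasis_apply hA)
    (hcomp ▸ toLpLin_eigenvectorBasis_apply hB) t
  rify at hle hge
  rw [abs_le]
  constructor <;> linarith

theorem eigSum_eq_sum_eigenvalues (F : ℂ → ℂ) {A : Matrix n n ℂ} (hA : A.IsHermitian) :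
    eigSum F A = ∑ i, F (hA.eigenvalues i) := by
  rw [eigSum, hA.roots_charpoly_eq_eigenvalues, Multiset.map_map]
  rfl

end Matrix

section CountingFunction

variable {ι κ E : Type*} [Fintype ι] [Fintype κ] [NormedAddCommGroup E]

theorem card_filter_mem_Ioc_add_countLE (a : ι → ℝ) {s t : ℝ} (hst : s ≤ t) :
    Finset.card {i | a i ∈ Set.Ioc s t} + countLE a s = countLE a t := by
  classical
  rw [countLE, countLE, ← Finset.card_union_of_disjoint, ← Finset.filter_or]
  · congr! 2 with i
    simp only [Set.mem_Ioc]
    grind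
  · exact Finset.disjoint_filter.2 fun i _ h ↦ h.1.not_ge

theorem abs_card_filter_mem_Ioc_sub_le {a : ι → ℝ} {b : κ → ℝ} {D : ℝ}
    (hD : ∀ t, |(countLE a t : ℝ) - countLE b t| ≤ D) {s t : ℝ} (hst : s ≤ t) :
    |(Finset.card {i | a i ∈ Set.Ioc s t} : ℝ) - Finset.card {k | b k ∈ Set.Ioc s t}| ≤ 2 * D := by
  have ha : (_ : ℝ) = _ := congrArg Nat.cast (card_filter_mem_Ioc_add_countLE a hst)
  have hb : (_ : ℝ) = _ := congrArg Nat.cast (card_filter_mem_Ioc_add_countLE b hst)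
  push_cast at ha hb
  have hs := abs_le.1 (hD s)
  have ht := abs_le.1 (hD t)
  rw [abs_le]
  constructor <;> linarith

theorem exists_finset_forall_notMem_apply_mul_eq_zero {F : ℝ → E} (hFc : HasCompactSupport F)
    {η : ℝ} (hη : η ≠ 0) : ∃ s : Finset ℤ, ∀ k ∉ s, F (k * η) = 0 := by
  have hemb : IsClosedEmbedding fun k : ℤ ↦ (k : ℝ) * η :=
    (Homeomorph.mulRight₀ η hη).isClosedEmbedding.comp Int.isClosedEmbedding_coe_real
  have hfin := isCompact_iff_finite.1 (hFc.comp_isClosedEmbedding hemb).isCompact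
  refine ⟨hfin.toFinset, fun k hk ↦ ?_⟩
  by_contra hne
  exact hk (hfin.mem_toFinset.2 (subset_tsupport _ hne))

theorem exists_step_approx {F : ℝ → E} (hF : Continuous F) (hFc : HasCompactSupport F)
    {ε : ℝ} (hε : 0 < ε) :
    ∃ (s : Finset ℤ) (η : ℝ), 0 < η ∧ ∀ x,
      ‖F x - ∑ k ∈ s, if x ∈ Set.Ioc ((k - 1) * η) (k * η) then F (k * η) else 0‖ ≤ ε := by
  obtain ⟨η, hη, hFη⟩ :=
    Metric.uniformContinuous_iff_le.1 (hFc.uniformContinuous_of_continuous hF) ε hε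
  obtain ⟨s, hs⟩ := exists_finset_forall_notMem_apply_mul_eq_zero hFc hη.ne'
  refine ⟨s, η, hη, fun x ↦ ?_⟩
  have hmem (k : ℤ) : x ∈ Set.Ioc ((k - 1) * η) (k * η) ↔ ⌈x / η⌉ = k := by
    rw [Int.ceil_eq_iff, lt_div_iff₀ hη, div_le_iff₀ hη, Set.mem_Ioc]
  obtain ⟨hlt, hle⟩ := (hmem _).2 rfl
  have hsum : ∑ k ∈ s, (if x ∈ Set.Ioc ((k - 1) * η) (k * η) then F (k * η) else 0)
      = F (⌈x / η⌉ * η) := by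
    simp only [hmem, Finset.sum_ite_eq]
    exact ite_eq_left_iff.2 fun h ↦ (hs _ h).symm
  rw [hsum, ← dist_eq_norm]
  refine hFη ?_
  rw [Real.dist_eq, abs_le]
  constructor <;> linarith

theorem norm_sum_sub_sum_le_of_forall_norm_sub_le {F G : ℝ → E} {ε : ℝ}
    (h : ∀ x, ‖F x - G x‖ ≤ ε) (a : ι → ℝ) :
    ‖∑ i, F (a i) - ∑ i, G (a i)‖ ≤ ε * Fintype.card ι := by
  rw [← Finset.sum_sub_distrib]
  simpa [mul_comm] using norm_sum_le_of_le Finset.univ fun i _ ↦ h (a i)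

variable [NormedSpace ℝ E]

theorem sum_sum_ite_eq_sum_card_smul {ζ : Type*} (s : Finset ζ) (p : ι → ζ → Prop)
    [∀ i, DecidablePred (p i)] (c : ζ → E) :
    ∑ i, ∑ k ∈ s, (if p i k then c k else 0) = ∑ k ∈ s, (Finset.card {i | p i k} : ℝ) • c k := by
  rw [Finset.sum_comm]
  refine Finset.sum_congr rfl fun k _ ↦ ?_
  rw [← Finset.sum_filter, Finset.sum_const, Nat.cast_smul_eq_nsmul]

theorem norm_sum_step_sub_sum_step_le {a : ι → ℝ} {b : κ → ℝ} {D : ℝ}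
    (hD : ∀ t, |(countLE a t : ℝ) - countLE b t| ≤ D) {ζ : Type*} (s : Finset ζ) {x y : ζ → ℝ}
    (hxy : ∀ k, x k ≤ y k) (c : ζ → E) :
    ‖∑ i, ∑ k ∈ s, (if a i ∈ Set.Ioc (x k) (y k) then c k else 0) -
        ∑ j, ∑ k ∈ s, (if b j ∈ Set.Ioc (x k) (y k) then c k else 0)‖ ≤
      (∑ k ∈ s, 2 * ‖c k‖) * D := by
  rw [sum_sum_ite_eq_sum_card_smul, sum_sum_ite_eq_sum_card_smul, ← Finset.sum_sub_distrib,
    Finset.sum_mul]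
  refine norm_sum_le_of_le _ fun k _ ↦ ?_
  rw [← sub_smul, norm_smul, Real.norm_eq_abs]
  calc _ ≤ 2 * D * ‖c k‖ := by gcongr; exact abs_card_filter_mem_Ioc_sub_le hD (hxy k)
    _ = 2 * ‖c k‖ * D := by ring

theorem exists_norm_sum_sub_sum_le {F : ℝ → E} (hF : Continuous F) (hFc : HasCompactSupport F)
    {ε : ℝ} (hε : 0 < ε) :
    ∃ C : ℝ, ∀ {ι κ : Type*} [Fintype ι] [Fintype κ] {a : ι → ℝ} {b : κ → ℝ} {D : ℝ},
      (∀ t, |(countLE a t : ℝ) - countLE b t| ≤ D) →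
        ‖∑ i, F (a i) - ∑ k, F (b k)‖ ≤ ε * (Fintype.card ι + Fintype.card κ) + C * D := by
  obtain ⟨s, η, hη, happrox⟩ := exists_step_approx hF hFc hε
  refine ⟨∑ k ∈ s, 2 * ‖F (k * η)‖, fun {ι κ _ _ a b D} hD ↦ ?_⟩
  set G : ℝ → E := fun x ↦
    ∑ k ∈ s, if x ∈ Set.Ioc ((k - 1) * η) (k * η) then F (k * η) else 0
  have hstep : ‖∑ i, G (a i) - ∑ k, G (b k)‖ ≤ (∑ k ∈ s, 2 * ‖F (k * η)‖) * D :=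
    norm_sum_step_sub_sum_step_le hD s (fun k ↦ by gcongr; linarith) _
  have ha := norm_sum_sub_sum_le_of_forall_norm_sub_le happrox a
  have hb := norm_sum_sub_sum_le_of_forall_norm_sub_le happrox b
  rw [norm_sub_rev] at hb
  calc ‖∑ i, F (a i) - ∑ k, F (b k)‖
      = ‖(∑ i, F (a i) - ∑ i, G (a i)) + (∑ i, G (a i) - ∑ k, G (b k)) +
          (∑ k, G (b k) - ∑ k, F (b k))‖ := by congr 1; abel
    _ ≤ _ := norm_add₃_le
    _ ≤ _ := by linarith

theorem norm_inv_card_smul_sum_le {g : ι → E} {M : ℝ} (hM : 0 ≤ M) (hg : ∀ i, ‖g i‖ ≤ M) :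
    ‖(Fintype.card ι : ℝ)⁻¹ • ∑ i, g i‖ ≤ M := by
  rw [norm_smul, norm_inv, RCLike.norm_natCast]
  refine inv_mul_le_of_le_mul₀ (Nat.cast_nonneg _) hM ?_
  simpa [mul_comm] using norm_sum_le_of_le Finset.univ fun i _ ↦ hg i

theorem inv_card_smul_sum_eq_div_smul (r : ℝ) (g : ι → E) :
    r⁻¹ • ∑ i, g i = (Fintype.card ι / r) • (Fintype.card ι : ℝ)⁻¹ • ∑ i, g i := by
  cases isEmpty_or_nonempty ι
  · simp
  · rw [smul_smul]
    congr 1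
    field_simp

end CountingFunction

section MeanAsymptotics

variable {E α : Type*} [NormedAddCommGroup E] [NormedSpace ℝ E] {l : Filter α}
  {ι κ : α → Type*} [∀ n, Fintype (ι n)] [∀ n, Fintype (κ n)]
  {a : ∀ n, ι n → ℝ} {b : ∀ n, κ n → ℝ} {D : α → ℝ}

theorem tendsto_inv_card_smul_sum_sub_sum
    (hD : ∀ n t, |(countLE (a n) t : ℝ) - countLE (b n) t| ≤ D n)
    (hD0 : Tendsto (fun n ↦ D n / Fintype.card (ι n)) l (𝓝 0))
    (hratio : Tendsto (fun n ↦ (Fintype.card (κ n) : ℝ) / Fintype.card (ι n)) l (𝓝 1))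
    {F : ℝ → E} (hF : Continuous F) (hFc : HasCompactSupport F) :
    Tendsto (fun n ↦ (Fintype.card (ι n) : ℝ)⁻¹ • (∑ i, F (a n i) - ∑ k, F (b n k)))
      l (𝓝 0) := by
  rw [NormedAddGroup.tendsto_nhds_zero]
  intro ε hε
  obtain ⟨C, hC⟩ := exists_norm_sum_sub_sum_le hF hFc (ε := ε / 4) (by positivity)
  have hbound : Tendsto (fun n ↦ ε / 4 * (1 + (Fintype.card (κ n) : ℝ) / Fintype.card (ι n)) +
      C * (D n / Fintype.card (ι n))) l (𝓝 (ε / 4 * (1 + 1) + C * 0)) :=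
    ((hratio.const_add 1).const_mul _).add (hD0.const_mul C)
  filter_upwards [hbound.eventually_lt_const (show _ < ε by linarith),
    hratio.eventually_ne one_ne_zero] with n hn hne
  refine lt_of_le_of_lt ?_ hn
  have hι : (Fintype.card (ι n) : ℝ) ≠ 0 := fun h ↦ hne (by rw [h, div_zero])
  rw [norm_smul, norm_inv, RCLike.norm_natCast]
  calc _ ≤ (Fintype.card (ι n) : ℝ)⁻¹ *
        (ε / 4 * (Fintype.card (ι n) + Fintype.card (κ n)) + C * D n) := by
        gcongr; exact hC (hD n)
    _ = _ := by field_simp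

theorem tendsto_mean_sub_mean (hD : ∀ n t, |(countLE (a n) t : ℝ) - countLE (b n) t| ≤ D n)
    (hD0 : Tendsto (fun n ↦ D n / Fintype.card (ι n)) l (𝓝 0))
    (hratio : Tendsto (fun n ↦ (Fintype.card (κ n) : ℝ) / Fintype.card (ι n)) l (𝓝 1))
    {F : ℝ → E} (hF : Continuous F) (hFc : HasCompactSupport F) :
    Tendsto (fun n ↦ (Fintype.card (ι n) : ℝ)⁻¹ • ∑ i, F (a n i) -
      (Fintype.card (κ n) : ℝ)⁻¹ • ∑ k, F (b n k)) l (𝓝 0) := by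
  obtain ⟨M, hM⟩ := hF.bounded_above_of_compact_support hFc
  have hM0 : 0 ≤ M := (norm_nonneg _).trans (hM 0)
  have hrescale : Tendsto (fun n ↦ ((Fintype.card (κ n) : ℝ) / Fintype.card (ι n) - 1) •
      (Fintype.card (κ n) : ℝ)⁻¹ • ∑ k, F (b n k)) l (𝓝 0) :=
    Tendsto.zero_smul_isBoundedUnder_le (by simpa using hratio.sub_const 1)
      (isBoundedUnder_of ⟨M, fun n ↦ norm_inv_card_smul_sum_le hM0 fun k ↦ hM (b n k)⟩)
  have hsum := (tendsto_inv_card_smul_sum_sub_sum hD hD0 hratio hF hFc).add hrescale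
  rw [add_zero] at hsum
  refine hsum.congr fun n ↦ ?_
  rw [smul_sub, inv_card_smul_sum_eq_div_smul _ fun k ↦ F (b n k), sub_smul, one_smul]
  abel

end MeanAsymptotics

theorem tendsto_mean_eigSum_sub_compression {α : Type*} {l : Filter α} {ι κ : α → Type*}
    [∀ n, Fintype (ι n)] [∀ n, DecidableEq (ι n)] [∀ n, Fintype (κ n)] [∀ n, DecidableEq (κ n)]
    {X : ∀ n, Matrix (ι n) (ι n) ℂ} (hX : ∀ n, (X n).IsHermitian)
    {P : ∀ n, Matrix (ι n) (κ n) ℂ} (hP : ∀ n, (P n)ᴴ * P n = 1)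
    (hratio : Tendsto (fun n ↦ (Fintype.card (κ n) : ℝ) / Fintype.card (ι n)) l (𝓝 1))
    {F : ℂ → ℂ} (hF : Continuous F) (hFc : HasCompactSupport F) :
    Tendsto (fun n ↦ (Fintype.card (ι n) : ℂ)⁻¹ * eigSum F (X n) -
      (Fintype.card (κ n) : ℂ)⁻¹ * eigSum F ((P n)ᴴ * X n * P n)) l (𝓝 0) := by
  have hgap : Tendsto (fun n ↦ ((Fintype.card (ι n) : ℝ) - Fintype.card (κ n)) /
      Fintype.card (ι n)) l (𝓝 0) := by
    rw [← sub_self (1 : ℝ)]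
    refine (hratio.const_sub 1).congr' ?_
    filter_upwards [hratio.eventually_ne one_ne_zero] with n hne
    have hι : (Fintype.card (ι n) : ℝ) ≠ 0 := fun h ↦ hne (by rw [h, div_zero])
    rw [sub_div, div_self hι]
  have hmean := tendsto_mean_sub_mean (fun n ↦ abs_countLE_eigenvalues_sub_le (hX n) (hP n))
    hgap hratio (hF.comp Complex.continuous_ofReal)
    (hFc.comp_isClosedEmbedding Complex.isometry_ofReal.isClosedEmbedding)
  refine hmean.congr fun n ↦ ?_
  simp [eigSum_eq_sum_eigenvalues, hX n, isHermitian_conjTranspose_mul_mul]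

theorem extradim_compression_eig_general {α : Type*} {l : Filter α} {ι κ : α → Type*}
    [∀ n, Fintype (ι n)] [∀ n, DecidableEq (ι n)] [∀ n, Fintype (κ n)] [∀ n, DecidableEq (κ n)]
    {X : ∀ n, Matrix (ι n) (ι n) ℂ} (hX : ∀ n, (X n).IsHermitian)
    {P : ∀ n, Matrix (ι n) (κ n) ℂ} (hP : ∀ n, (P n)ᴴ * P n = 1)
    (hratio : Tendsto (fun n ↦ (Fintype.card (κ n) : ℝ) / Fintype.card (ι n)) l (𝓝 1))
    {F : ℂ → ℂ} (hF : Continuous F) (hFc : HasCompactSupport F) {z : ℂ} :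
    Tendsto (fun n ↦ (Fintype.card (ι n) : ℂ)⁻¹ * eigSum F (X n)) l (𝓝 z) ↔
      Tendsto (fun n ↦ (Fintype.card (κ n) : ℂ)⁻¹ * eigSum F ((P n)ᴴ * X n * P n)) l (𝓝 z) := by
  refine tendsto_iff_of_dist ?_
  simpa [dist_eq_norm] using (tendsto_mean_eigSum_sub_compression hX hP hratio hF hFc).norm

/-- extradimensional compression, eigenvalue version:
if `X_n` is Hermitian of order `d_n → ∞`, `P_n` is a `d_n × d_n'` compression matrix
(`d_n' < d_n`, `P_n* P_n = I`), `Y_n = P_n* X_n P_n` and `d_n'/d_n → 1`, then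
`{X_n}_n ∼_λ f` iff `{Y_n}_n ∼_λ f`. -/
theorem extradim_compression_eig
    (l s : ℕ) (Ω : Set (Fin l → ℝ)) (hΩmeas : MeasurableSet Ω)
    (hΩpos : 0 < volume Ω) (hΩfin : volume Ω < ⊤)
    (f : (Fin l → ℝ) → Matrix (Fin s) (Fin s) ℂ)
    (hf : ∀ i j, Measurable fun θ => f θ i j)
    (d d' : ℕ → ℕ)
    (hd : Tendsto d atTop atTop)
    (hlt : ∀ n, d' n < d n)
    (X : ∀ n, Matrix (Fin (d n)) (Fin (d n)) ℂ)
    (hX : ∀ n, (X n).IsHermitian)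
    (P : ∀ n, Matrix (Fin (d n)) (Fin (d' n)) ℂ)
    (hP : ∀ n, (P n)ᴴ * P n = 1)
    (hratio : Tendsto (fun n => (d' n : ℝ) / (d n : ℝ)) atTop (𝓝 1)) :
    DistributedEig Ω f X ↔ DistributedEig Ω f (fun n => (P n)ᴴ * X n * P n) :=
  forall₃_congr fun _ hF hFc ↦ extradim_compression_eig_general hX hP (by simpa using hratio) hF hFc

end
end

section
/- Let {X_n}_n and {Y_n}_n be two sequences of complex matrices of the same sizes d_n × e_n with min{d_n,e_n} → ∞, and suppose the difference sequence is zero-distributed: {X_n − Y_n}_n ∼_σ 0. Then for any measurable G : Ω → ℂ^{s×t} on a measurable set Ω ⊆ ℝ^ℓ with 0 < m_ℓ(Ω) < ∞: {X_n}_n ∼_σ G if and only if {Y_n}_n ∼_σ G. If in addition all X_n and Y_n are Hermitian, then also {X_n}_n ∼_λ G if and only if {Y_n}_n ∼_λ G. -/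
open MeasureTheory Filter Topology Matrix
open scoped Real

noncomputable section

/-!
Write `σᵢ` for the singular values in decreasing order and `N` for the number of them. By
Courant–Fischer (three subspaces whose dimensions add up to more than twice the dimension of the
space share a nonzero vector), `σᵢ₊ⱼ(X) ≤ σᵢ(Y) + σⱼ(X - Y)`, and for Hermitian matrices
`λᵢ₊ⱼ(X) ≤ λᵢ(Y) + σⱼ(X - Y)`. Zero-distribution says that for every `ε > 0` only `k = o(N)`
singular values of `X - Y` exceed `ε`, so that `σᵢ₊ₖ(X) ≤ σᵢ(Y) + ε` and, symmetrically,
`σᵢ₊ₖ(Y) ≤ σᵢ(X) + ε`.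

A bounded monotone uniformly continuous test function turns these interlacing inequalities into
inequalities between means, up to `o(1)`. To reach a compactly supported continuous `F`, factor it
as `g ∘ u`, where `u : ℝ → [0, 1]` is monotone and `g` is continuous on `[0, 1]`: the powers of `u`
are monotone, and Bernstein polynomials approximate `g` uniformly.
-/

section LinearMaps

open Module InnerProductSpace

variable {𝕜 E F : Type*} [RCLike 𝕜]
  [NormedAddCommGroup E] [InnerProductSpace 𝕜 E]
  [NormedAddCommGroup F] [InnerProductSpace 𝕜 F]

lemma exists_ne_zero_mem_inf_inf_of_finrank {K V : Type*} [DivisionRing K]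
    [AddCommGroup V] [Module K V] [FiniteDimensional K V] {U₁ U₂ U₃ : Submodule K V}
    (h : 2 * finrank K V < finrank K U₁ + finrank K U₂ + finrank K U₃) :
    ∃ x ∈ U₁ ⊓ U₂ ⊓ U₃, x ≠ 0 := by
  refine Submodule.exists_mem_ne_zero_of_ne_bot fun hbot => ?_
  have h₁₂ := Submodule.finrank_sup_add_finrank_inf_eq U₁ U₂
  have h₁₂₃ := Submodule.finrank_sup_add_finrank_inf_eq (U₁ ⊓ U₂) U₃
  rw [hbot, finrank_bot] at h₁₂₃
  have := Submodule.finrank_le (U₁ ⊔ U₂)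
  have := Submodule.finrank_le (U₁ ⊓ U₂ ⊔ U₃)
  omega

section OrthonormalBasis

variable {ι : Type*} [Fintype ι] (b : OrthonormalBasis ι 𝕜 E)

lemma finrank_span_orthonormalBasis_image (S : Finset ι) :
    finrank 𝕜 (Submodule.span 𝕜 (b '' S)) = S.card := by
  have hli : LinearIndependent 𝕜 fun i : (S : Set ι) => b i :=
    b.orthonormal.linearIndependent.comp _ Subtype.val_injective
  rw [Set.image_eq_range, finrank_span_eq_card hli]
  simp

lemma inner_eq_zero_of_mem_span_orthonormalBasis_image {S : Set ι} {x : E}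
    (hx : x ∈ Submodule.span 𝕜 (b '' S)) {i : ι} (hi : i ∉ S) : ⟪b i, x⟫_𝕜 = 0 := by
  suffices h : Submodule.span 𝕜 (b '' S) ≤ (𝕜 ∙ b i)ᗮ from
    Submodule.mem_orthogonal_singleton_iff_inner_right.1 (h hx)
  rw [Submodule.span_le]
  rintro _ ⟨j, hj, rfl⟩
  exact Submodule.mem_orthogonal_singleton_iff_inner_right.2
    (b.orthonormal.2 fun hij => hi (hij ▸ hj))

end OrthonormalBasis

section Symmetric

variable [FiniteDimensional 𝕜 E] {T : E →ₗ[𝕜] E} (hT : T.IsSymmetric)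

section Eigenbasis

variable {n : ℕ} (hn : finrank 𝕜 E = n)

lemma re_inner_apply_self_eq_sum_eigenvalues (x : E) :
    RCLike.re ⟪T x, x⟫_𝕜 =
      ∑ i, hT.eigenvalues hn i * ‖⟪hT.eigenvectorBasis hn i, x⟫_𝕜‖ ^ 2 := by
  rw [← (hT.eigenvectorBasis hn).sum_inner_mul_inner, map_sum]
  refine Finset.sum_congr rfl fun i _ => ?_
  rw [hT, hT.apply_eigenvectorBasis, inner_smul_right, mul_assoc, RCLike.re_ofReal_mul,
    inner_mul_symm_re_eq_norm, norm_mul, norm_inner_symm x, sq]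

lemma mul_sq_norm_le_re_inner_of_mem_span {S : Set (Fin n)} {c : ℝ}
    (hc : ∀ i ∈ S, c ≤ hT.eigenvalues hn i) {x : E}
    (hx : x ∈ Submodule.span 𝕜 (hT.eigenvectorBasis hn '' S)) :
    c * ‖x‖ ^ 2 ≤ RCLike.re ⟪T x, x⟫_𝕜 := by
  rw [re_inner_apply_self_eq_sum_eigenvalues hT hn,
    ← (hT.eigenvectorBasis hn).sum_sq_norm_inner_right x, Finset.mul_sum]
  refine Finset.sum_le_sum fun i _ => ?_
  by_cases hi : i ∈ S
  · gcongr
    exact hc i hi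
  · simp [inner_eq_zero_of_mem_span_orthonormalBasis_image _ hx hi]

lemma re_inner_le_mul_sq_norm_of_mem_span {S : Set (Fin n)} {c : ℝ}
    (hc : ∀ i ∈ S, hT.eigenvalues hn i ≤ c) {x : E}
    (hx : x ∈ Submodule.span 𝕜 (hT.eigenvectorBasis hn '' S)) :
    RCLike.re ⟪T x, x⟫_𝕜 ≤ c * ‖x‖ ^ 2 := by
  rw [re_inner_apply_self_eq_sum_eigenvalues hT hn,
    ← (hT.eigenvectorBasis hn).sum_sq_norm_inner_right x, Finset.mul_sum]
  refine Finset.sum_le_sum fun i _ => ?_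
  by_cases hi : i ∈ S
  · gcongr
    exact hc i hi
  · simp [inner_eq_zero_of_mem_span_orthonormalBasis_image _ hx hi]

end Eigenbasis

/-- The eigenvalues of a symmetric operator in decreasing order, extended by zero to a sequence
indexed by `ℕ`, as for `LinearMap.singularValues`. -/
def sortedEigenvalues (i : ℕ) : ℝ :=
  if hi : i < finrank 𝕜 E then hT.eigenvalues rfl ⟨i, hi⟩ else 0

lemma sortedEigenvalues_of_lt {n : ℕ} (hn : finrank 𝕜 E = n) {i : ℕ} (hi : i < n) :
    sortedEigenvalues hT i = hT.eigenvalues hn ⟨i, hi⟩ := by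
  subst hn
  exact dif_pos hi

lemma exists_submodule_sortedEigenvalues_mul_le_re_inner {i : ℕ} (hi : i < finrank 𝕜 E) :
    ∃ V : Submodule 𝕜 E, finrank 𝕜 V = i + 1 ∧
      ∀ x ∈ V, sortedEigenvalues hT i * ‖x‖ ^ 2 ≤ RCLike.re ⟪T x, x⟫_𝕜 := by
  refine ⟨Submodule.span 𝕜 (hT.eigenvectorBasis rfl '' (Finset.Iic ⟨i, hi⟩ : Finset (Fin _))),
    by rw [finrank_span_orthonormalBasis_image, Fin.card_Iic], fun x hx => ?_⟩
  refine mul_sq_norm_le_re_inner_of_mem_span hT rfl (fun j hj => ?_) hx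
  rw [sortedEigenvalues_of_lt hT rfl hi]
  exact hT.eigenvalues_antitone rfl (Finset.mem_Iic.1 hj)

lemma exists_submodule_re_inner_le_sortedEigenvalues_mul (i : ℕ) :
    ∃ V : Submodule 𝕜 E, finrank 𝕜 E ≤ finrank 𝕜 V + i ∧
      ∀ x ∈ V, RCLike.re ⟪T x, x⟫_𝕜 ≤ sortedEigenvalues hT i * ‖x‖ ^ 2 := by
  by_cases! hi : finrank 𝕜 E ≤ i
  · exact ⟨⊥, by omega, by simp⟩
  refine ⟨Submodule.span 𝕜 (hT.eigenvectorBasis rfl '' (Finset.Ici ⟨i, hi⟩ : Finset (Fin _))),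
    by rw [finrank_span_orthonormalBasis_image, Fin.card_Ici]; dsimp only; omega, fun x hx => ?_⟩
  refine re_inner_le_mul_sq_norm_of_mem_span hT rfl (fun j hj => ?_) hx
  rw [sortedEigenvalues_of_lt hT rfl hi]
  exact hT.eigenvalues_antitone rfl (Finset.mem_Ici.1 hj)

end Symmetric

variable [FiniteDimensional 𝕜 E] [FiniteDimensional 𝕜 F]

lemma sq_singularValues_eq_sortedEigenvalues (T : E →ₗ[𝕜] F) (i : ℕ) :
    T.singularValues i ^ 2 = sortedEigenvalues T.isSymmetric_adjoint_comp_self i := by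
  by_cases! hi : finrank 𝕜 E ≤ i
  · simp [sortedEigenvalues, T.singularValues_of_finrank_le hi, hi.not_gt]
  · rw [T.sq_singularValues_of_lt rfl hi, sortedEigenvalues_of_lt _ rfl hi]

lemma re_inner_adjoint_comp_self_apply (T : E →ₗ[𝕜] F) (x : E) :
    RCLike.re ⟪(T.adjoint ∘ₗ T) x, x⟫_𝕜 = ‖T x‖ ^ 2 := by
  rw [LinearMap.comp_apply, LinearMap.adjoint_inner_left, inner_self_eq_norm_sq]

lemma exists_submodule_singularValues_mul_norm_le (T : E →ₗ[𝕜] F) {i : ℕ}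
    (hi : i < finrank 𝕜 E) :
    ∃ V : Submodule 𝕜 E, finrank 𝕜 V = i + 1 ∧ ∀ x ∈ V, T.singularValues i * ‖x‖ ≤ ‖T x‖ := by
  obtain ⟨V, hV, hle⟩ :=
    exists_submodule_sortedEigenvalues_mul_le_re_inner T.isSymmetric_adjoint_comp_self hi
  refine ⟨V, hV, fun x hx => le_of_sq_le_sq ?_ (norm_nonneg _)⟩
  rw [mul_pow, sq_singularValues_eq_sortedEigenvalues, ← re_inner_adjoint_comp_self_apply]
  exact hle x hx

lemma exists_submodule_norm_apply_le_singularValues_mul (T : E →ₗ[𝕜] F) (i : ℕ) :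
    ∃ V : Submodule 𝕜 E, finrank 𝕜 E ≤ finrank 𝕜 V + i ∧
      ∀ x ∈ V, ‖T x‖ ≤ T.singularValues i * ‖x‖ := by
  obtain ⟨V, hV, hle⟩ :=
    exists_submodule_re_inner_le_sortedEigenvalues_mul T.isSymmetric_adjoint_comp_self i
  refine ⟨V, hV, fun x hx =>
    le_of_sq_le_sq ?_ (mul_nonneg (T.singularValues_nonneg i) (norm_nonneg _))⟩
  rw [mul_pow, sq_singularValues_eq_sortedEigenvalues, ← re_inner_adjoint_comp_self_apply]
  exact hle x hx

theorem singularValues_add_le (S T : E →ₗ[𝕜] F) (i j : ℕ) :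
    S.singularValues (i + j) ≤ T.singularValues i + (S - T).singularValues j := by
  by_cases! hij : finrank 𝕜 E ≤ i + j
  · rw [S.singularValues_of_finrank_le hij]
    exact add_nonneg (T.singularValues_nonneg i) ((S - T).singularValues_nonneg j)
  obtain ⟨V, hV, hS⟩ := exists_submodule_singularValues_mul_norm_le S hij
  obtain ⟨W, hW, hT⟩ := exists_submodule_norm_apply_le_singularValues_mul T i
  obtain ⟨U, hU, hST⟩ := exists_submodule_norm_apply_le_singularValues_mul (S - T) j
  obtain ⟨x, ⟨⟨hxV, hxW⟩, hxU⟩, hx⟩ :=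
    exists_ne_zero_mem_inf_inf_of_finrank (U₁ := V) (U₂ := W) (U₃ := U) (by omega)
  refine le_of_mul_le_mul_right ?_ (norm_pos_iff.2 hx)
  calc S.singularValues (i + j) * ‖x‖ ≤ ‖S x‖ := hS x hxV
    _ = ‖T x + (S - T) x‖ := by simp
    _ ≤ ‖T x‖ + ‖(S - T) x‖ := norm_add_le _ _
    _ ≤ T.singularValues i * ‖x‖ + (S - T).singularValues j * ‖x‖ :=
      add_le_add (hT x hxW) (hST x hxU)
    _ = (T.singularValues i + (S - T).singularValues j) * ‖x‖ := (add_mul _ _ _).symm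

theorem sortedEigenvalues_add_le {S T : E →ₗ[𝕜] E} (hS : S.IsSymmetric) (hT : T.IsSymmetric)
    {i j : ℕ} (hij : i + j < finrank 𝕜 E) :
    sortedEigenvalues hS (i + j) ≤ sortedEigenvalues hT i + (S - T).singularValues j := by
  obtain ⟨V, hV, hSV⟩ := exists_submodule_sortedEigenvalues_mul_le_re_inner hS hij
  obtain ⟨W, hW, hTW⟩ := exists_submodule_re_inner_le_sortedEigenvalues_mul hT i
  obtain ⟨U, hU, hST⟩ := exists_submodule_norm_apply_le_singularValues_mul (S - T) j
  obtain ⟨x, ⟨⟨hxV, hxW⟩, hxU⟩, hx⟩ :=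
    exists_ne_zero_mem_inf_inf_of_finrank (U₁ := V) (U₂ := W) (U₃ := U) (by omega)
  have hdiff : RCLike.re ⟪(S - T) x, x⟫_𝕜 ≤ (S - T).singularValues j * ‖x‖ ^ 2 :=
    calc RCLike.re ⟪(S - T) x, x⟫_𝕜 ≤ ‖(S - T) x‖ * ‖x‖ := re_inner_le_norm _ _
      _ ≤ (S - T).singularValues j * ‖x‖ * ‖x‖ := by gcongr; exact hST x hxU
      _ = (S - T).singularValues j * ‖x‖ ^ 2 := by ring
  refine le_of_mul_le_mul_right ?_ (pow_pos (norm_pos_iff.2 hx) 2)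
  calc sortedEigenvalues hS (i + j) * ‖x‖ ^ 2 ≤ RCLike.re ⟪S x, x⟫_𝕜 := hSV x hxV
    _ = RCLike.re ⟪T x, x⟫_𝕜 + RCLike.re ⟪(S - T) x, x⟫_𝕜 := by
      rw [← map_add, ← inner_add_left, LinearMap.sub_apply, add_sub_cancel]
    _ ≤ sortedEigenvalues hT i * ‖x‖ ^ 2 + (S - T).singularValues j * ‖x‖ ^ 2 :=
      add_le_add (hTW x hxW) hdiff
    _ = (sortedEigenvalues hT i + (S - T).singularValues j) * ‖x‖ ^ 2 := (add_mul _ _ _).symm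

lemma singularValues_eq_zero_of_finrank_le (T : E →ₗ[𝕜] F) {i : ℕ} (hi : finrank 𝕜 F ≤ i) :
    T.singularValues i = 0 :=
  T.singularValues_eq_zero_iff_le_finrank_range.2 ((Submodule.finrank_le _).trans hi)

end LinearMaps

section EmpiricalMeans

open Finset

section Mean

variable {E : Type*} [NormedAddCommGroup E] [NormedSpace ℝ E]

/-- The integral of `F` against the empirical measure of `a 0, …, a (N - 1)`. It is `0` when
`N = 0`. -/
def empiricalMean (N : ℕ) (a : ℕ → ℝ) (F : ℝ → E) : E :=
  (N : ℝ)⁻¹ • ∑ i ∈ range N, F (a i)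

lemma dist_empiricalMean_le {F G : ℝ → E} {δ : ℝ} (h : ∀ x, dist (F x) (G x) ≤ δ)
    (N : ℕ) (a : ℕ → ℝ) : dist (empiricalMean N a F) (empiricalMean N a G) ≤ δ :=
  calc dist (empiricalMean N a F) (empiricalMean N a G)
      = (N : ℝ)⁻¹ * dist (∑ i ∈ range N, F (a i)) (∑ i ∈ range N, G (a i)) := by
        rw [empiricalMean, empiricalMean, dist_smul₀, norm_inv, RCLike.norm_natCast]
    _ ≤ (N : ℝ)⁻¹ * (N * δ) := by
        gcongr
        simpa using dist_sum_sum_le_of_le (range N) fun i _ => h (a i)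
    _ ≤ δ := by
        rw [← mul_assoc]
        exact mul_le_of_le_one_left (dist_nonneg.trans (h 0)) inv_mul_le_one

lemma empiricalMean_sum_smul {ι : Type*} (s : Finset ι) (φ : ι → ℝ → ℝ) (v : ι → E)
    (N : ℕ) (a : ℕ → ℝ) :
    empiricalMean N a (fun x => ∑ j ∈ s, φ j x • v j) =
      ∑ j ∈ s, empiricalMean N a (φ j) • v j := by
  simp only [empiricalMean, sum_comm (s := range N), ← sum_smul, smul_sum (s := s), smul_assoc]

end Mean

lemma sum_range_le_of_shift_le {f g : ℕ → ℝ} {C η : ℝ} (hf : ∀ i, f i ∈ Set.Icc 0 C)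
    (hg : ∀ i, 0 ≤ g i) (hη : 0 ≤ η) {N k : ℕ} (h : ∀ i, i + k < N → f (i + k) ≤ g i + η) :
    ∑ i ∈ range N, f i ≤ ∑ i ∈ range N, g i + k * C + N * η :=
  calc ∑ i ∈ range N, f i ≤ ∑ i ∈ range (k + (N - k)), f i :=
        sum_le_sum_of_subset_of_nonneg (range_subset_range.2 (by omega)) fun i _ _ => (hf i).1
    _ = ∑ i ∈ range k, f i + ∑ i ∈ range (N - k), f (k + i) := sum_range_add f _ _
    _ ≤ ∑ _ ∈ range k, C + ∑ i ∈ range (N - k), (g i + η) := by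
        gcongr with i _ i hi
        · exact (hf i).2
        · rw [add_comm]
          exact h i (by have := mem_range.1 hi; omega)
    _ ≤ ∑ _ ∈ range k, C + ∑ i ∈ range N, (g i + η) := by
        gcongr
        · exact fun i _ _ => add_nonneg (hg i) hη
        · exact Nat.sub_le N k
    _ = ∑ i ∈ range N, g i + k * C + N * η := by
        simp only [sum_add_distrib, sum_const, card_range, nsmul_eq_mul]
        ring

lemma exists_eq_comp_monotone_of_hasCompactSupport {X : Type*} [TopologicalSpace X] [Zero X]
    {F : ℝ → X} (hF : Continuous F) (hFs : HasCompactSupport F) :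
    ∃ u : ℝ → unitInterval, Monotone u ∧ UniformContinuous u ∧
      ∃ g : C(unitInterval, X), F = fun x => g (u x) := by
  obtain ⟨M, hM, hzero⟩ := hFs.exists_pos_le_norm
  have hM2 : 0 < 2 * M := by positivity
  refine ⟨fun x => Set.projIcc 0 1 zero_le_one ((x + M) / (2 * M)),
    fun x y hxy => Set.monotone_projIcc _ (by gcongr),
    (LipschitzWith.projIcc _).uniformContinuous.comp
      ((uniformContinuous_id.add uniformContinuous_const).div_const' _),
    ⟨fun y => F (2 * M * y - M), by fun_prop⟩, funext fun x => ?_⟩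
  simp only [ContinuousMap.coe_mk]
  rcases le_total x (-M) with hleft | hleft
  · rw [Set.projIcc_of_le_left _ (div_nonpos_of_nonpos_of_nonneg (by linarith) hM2.le),
      hzero x (le_abs.2 (.inr (le_neg.2 hleft)))]
    simp [hzero, abs_of_pos hM]
  rcases le_total M x with hright | hright
  · rw [Set.projIcc_of_right_le _ ((one_le_div hM2).2 (by linarith)),
      hzero x (le_abs.2 (.inl hright))]
    simp [hzero, abs_of_pos hM, two_mul]
  · rw [Set.projIcc_of_mem _ ⟨div_nonneg (by linarith) hM2.le, (div_le_one hM2).2 (by linarith)⟩,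
      mul_div_cancel₀ _ hM2.ne', add_sub_cancel_right]

variable {α : Type*} {l : Filter α} {N : α → ℕ} {a b : α → ℕ → ℝ}

/-- Up to an arbitrarily small `ε` and an index shift `k n = o(N n)`, the terms of
`a n 0, …, a n (N n - 1)` are dominated by those of `b n 0, …, b n (N n - 1)`. For decreasing
arrays this is one half of the asymptotic equality of the two empirical measures. -/
def ShiftDominated (l : Filter α) (N : α → ℕ) (a b : α → ℕ → ℝ) : Prop :=
  ∀ ε > 0, ∃ k : α → ℕ, Tendsto (fun n => (k n : ℝ) / N n) l (𝓝 0) ∧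
    ∀ n i, i + k n < N n → a n (i + k n) ≤ b n i + ε

lemma ShiftDominated.eventually_empiricalMean_le (hab : ShiftDominated l N a b) {h : ℝ → ℝ}
    (hmono : Monotone h) (huc : UniformContinuous h) (hI : ∀ x, h x ∈ Set.Icc 0 1)
    {δ : ℝ} (hδ : 0 < δ) :
    ∀ᶠ n in l, empiricalMean (N n) (a n) h ≤ empiricalMean (N n) (b n) h + δ := by
  obtain ⟨ε, hε, hmod⟩ := Metric.uniformContinuous_iff_le.1 huc (δ / 2) (half_pos hδ)
  obtain ⟨k, hk, hle⟩ := hab ε hε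
  have hh_le (n i) (hi : i + k n < N n) : h (a n (i + k n)) ≤ h (b n i) + δ / 2 := by
    have hosc : |h (b n i + ε) - h (b n i)| ≤ δ / 2 := hmod (by simp [abs_of_pos hε])
    linarith [hmono (hle n i hi), le_of_abs_le hosc]
  filter_upwards [hk.eventually_le_const (half_pos hδ)] with n hn
  have hsum := sum_range_le_of_shift_le (fun i => hI (a n i)) (fun i => (hI (b n i)).1)
    (half_pos hδ).le (hh_le n)
  calc empiricalMean (N n) (a n) h
      ≤ (N n : ℝ)⁻¹ * (∑ i ∈ range (N n), h (b n i) + k n * 1 + N n * (δ / 2)) :=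
        mul_le_mul_of_nonneg_left hsum (by positivity)
    _ = empiricalMean (N n) (b n) h + k n / N n + (N n : ℝ)⁻¹ * N n * (δ / 2) := by
        rw [empiricalMean, smul_eq_mul]
        ring
    _ ≤ empiricalMean (N n) (b n) h + δ / 2 + 1 * (δ / 2) := by
        gcongr
        exact inv_mul_le_one
    _ = empiricalMean (N n) (b n) h + δ := by ring

lemma tendsto_empiricalMean_sub_of_monotone (hab : ShiftDominated l N a b)
    (hba : ShiftDominated l N b a) {h : ℝ → ℝ} (hmono : Monotone h) (huc : UniformContinuous h)
    (hI : ∀ x, h x ∈ Set.Icc 0 1) :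
    Tendsto (fun n => empiricalMean (N n) (a n) h - empiricalMean (N n) (b n) h) l (𝓝 0) := by
  refine Metric.tendsto_nhds.2 fun δ hδ => ?_
  filter_upwards [hab.eventually_empiricalMean_le hmono huc hI (half_pos hδ),
    hba.eventually_empiricalMean_le hmono huc hI (half_pos hδ)] with n hn₁ hn₂
  rw [dist_zero_right, Real.norm_eq_abs, abs_lt]
  constructor <;> linarith

variable {u : ℝ → unitInterval}

lemma tendsto_empiricalMean_sub_polynomial (hab : ShiftDominated l N a b)
    (hba : ShiftDominated l N b a) (hmono : Monotone u) (huc : UniformContinuous u)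
    (p : Polynomial ℝ) :
    Tendsto (fun n => empiricalMean (N n) (a n) (fun x => p.eval (u x : ℝ)) -
      empiricalMean (N n) (b n) (fun x => p.eval (u x : ℝ))) l (𝓝 0) := by
  have hpow (j : ℕ) : Tendsto (fun n => empiricalMean (N n) (a n) (fun x => (u x : ℝ) ^ j) -
      empiricalMean (N n) (b n) (fun x => (u x : ℝ) ^ j)) l (𝓝 0) := by
    have hpow_uc : UniformContinuous fun y : unitInterval => (y : ℝ) ^ j :=
      CompactSpace.uniformContinuous_of_continuous (by fun_prop)
    exact tendsto_empiricalMean_sub_of_monotone hab hba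
      (fun x y hxy => pow_le_pow_left₀ (u x).2.1 (hmono hxy) j) (hpow_uc.comp huc)
      fun x => ⟨pow_nonneg (u x).2.1 j, pow_le_one₀ (u x).2.1 (u x).2.2⟩
  have heval (x : ℝ) : p.eval (u x : ℝ) = ∑ j ∈ p.support, (u x : ℝ) ^ j • p.coeff j := by
    simp [p.eval_eq_sum, Polynomial.sum_def, mul_comm]
  simp only [heval, empiricalMean_sum_smul, ← sum_sub_distrib, ← sub_smul]
  simpa using tendsto_finsetSum p.support fun j _ => (hpow j).smul_const (p.coeff j)

variable {E : Type*} [NormedAddCommGroup E] [NormedSpace ℝ E]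

lemma tendsto_empiricalMean_sub_comp (hab : ShiftDominated l N a b)
    (hba : ShiftDominated l N b a) (hmono : Monotone u) (huc : UniformContinuous u)
    (g : C(unitInterval, E)) :
    Tendsto (fun n => empiricalMean (N n) (a n) (fun x => g (u x)) -
      empiricalMean (N n) (b n) (fun x => g (u x))) l (𝓝 0) := by
  have hbernstein (m : ℕ) : Tendsto (fun n =>
      empiricalMean (N n) (a n) (fun x => bernsteinApproximation m g (u x)) -
      empiricalMean (N n) (b n) (fun x => bernsteinApproximation m g (u x))) l (𝓝 0) := by
    have hbasis (j : ℕ) : Tendsto (fun n =>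
        empiricalMean (N n) (a n) (fun x => bernstein m j (u x)) -
        empiricalMean (N n) (b n) (fun x => bernstein m j (u x))) l (𝓝 0) :=
      tendsto_empiricalMean_sub_polynomial hab hba hmono huc (bernsteinPolynomial ℝ m j)
    simp only [bernsteinApproximation.apply, empiricalMean_sum_smul, ← sum_sub_distrib,
      ← sub_smul]
    simpa using tendsto_finsetSum univ fun (j : Fin (m + 1)) _ =>
      (hbasis j).smul_const (g (bernstein.z j))
  refine Metric.tendsto_nhds.2 fun δ hδ => ?_
  obtain ⟨m, hm⟩ :=
    (Metric.tendsto_nhds.1 (bernsteinApproximation_uniform g) (δ / 3) (by positivity)).exists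
  have happrox (x : ℝ) : dist (g (u x)) (bernsteinApproximation m g (u x)) ≤ δ / 3 := by
    rw [dist_comm]
    exact (ContinuousMap.dist_apply_le_dist (u x)).trans hm.le
  filter_upwards [Metric.tendsto_nhds.1 (hbernstein m) (δ / 3) (by positivity)] with n hn
  rw [dist_zero_right, ← dist_eq_norm] at hn ⊢
  calc _ ≤ _ := dist_triangle4_right _ _ _ _
    _ < δ / 3 + δ / 3 + δ / 3 :=
      add_lt_add_of_le_of_lt (add_le_add (dist_empiricalMean_le happrox (N n) (a n))
        (dist_empiricalMean_le happrox (N n) (b n))) hn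
    _ = δ := by ring

theorem tendsto_empiricalMean_sub_of_hasCompactSupport (hab : ShiftDominated l N a b)
    (hba : ShiftDominated l N b a) {F : ℝ → E} (hF : Continuous F) (hFs : HasCompactSupport F) :
    Tendsto (fun n => empiricalMean (N n) (a n) F - empiricalMean (N n) (b n) F) l (𝓝 0) := by
  obtain ⟨v, hmono, huc, g, rfl⟩ := exists_eq_comp_monotone_of_hasCompactSupport hF hFs
  exact tendsto_empiricalMean_sub_comp hab hba hmono huc g

lemma apply_card_filter_lt_range_le {β : Type*} [LinearOrder β] {c : ℕ → β} (hc : Antitone c)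
    {N : ℕ} {ε : β}
    (h : #{i ∈ range N | ε < c i} < N) : c #{i ∈ range N | ε < c i} ≤ ε := by
  by_contra! hlt
  have hsub : range (#{i ∈ range N | ε < c i} + 1) ⊆ {i ∈ range N | ε < c i} := fun i hi =>
    mem_filter.2 ⟨by grind, hlt.trans_le (hc (by grind))⟩
  simpa using card_le_card hsub

theorem tendsto_card_filter_lt_div {c : α → ℕ → ℝ}
    (hc : ∀ F : ℝ → ℝ, Continuous F → HasCompactSupport F →
      Tendsto (fun n => empiricalMean (N n) (c n) F) l (𝓝 (F 0))) {ε : ℝ} (hε : 0 < ε) :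
    Tendsto (fun n => (#{i ∈ range (N n) | ε < c n i} : ℝ) / N n) l (𝓝 0) := by
  obtain ⟨f, hf_one, hf_zero, hf_supp, hf_mem⟩ := exists_continuous_one_zero_of_isCompact
    (isCompact_singleton (x := (0 : ℝ))) (Metric.isOpen_ball (x := (0 : ℝ)) (ε := ε)).isClosed_compl
    (by simpa using hε)
  have hf0 : f 0 = 1 := hf_one rfl
  have hfε {x : ℝ} (hx : ε < x) : f x = 0 := hf_zero (by simpa using hx.le.trans (le_abs_self x))
  have hlim : Tendsto (fun n => 1 - empiricalMean (N n) (c n) f) l (𝓝 0) := by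
    simpa [hf0] using (hc f f.continuous hf_supp).const_sub 1
  refine squeeze_zero (fun n => by positivity) (fun n => ?_) hlim
  have hcount : (#{i ∈ range (N n) | ε < c n i} : ℝ) + ∑ i ∈ range (N n), f (c n i) ≤ N n := by
    rw [card_filter, Nat.cast_sum, ← sum_add_distrib]
    calc _ ≤ ∑ _ ∈ range (N n), (1 : ℝ) := sum_le_sum fun i _ => by
          split_ifs with hi
          · simp [hfε hi]
          · simpa using (hf_mem (c n i)).2
      _ = N n := by simp
  rw [le_sub_iff_add_le, empiricalMean, smul_eq_mul, inv_mul_eq_div, ← add_div]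
  exact div_le_one_of_le₀ hcount (by positivity)

theorem shiftDominated_of_add_le {c : α → ℕ → ℝ} (hanti : ∀ n, Antitone (c n))
    (hc : ∀ F : ℝ → ℝ, Continuous F → HasCompactSupport F →
      Tendsto (fun n => empiricalMean (N n) (c n) F) l (𝓝 (F 0)))
    (hle : ∀ n i j, i + j < N n → a n (i + j) ≤ b n i + c n j) : ShiftDominated l N a b :=
  fun ε hε => ⟨fun n => #{i ∈ range (N n) | ε < c n i}, tendsto_card_filter_lt_div hc hε,
    fun n i hi => (hle n i _ hi).trans <| by
      gcongr
      exact apply_card_filter_lt_range_le (hanti n) ((Nat.le_add_left _ i).trans_lt hi)⟩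

end EmpiricalMeans

section Matrices

open Module Finset

section Fixed

variable {𝕜 m n : Type*} [RCLike 𝕜] [Fintype m] [Fintype n] [DecidableEq m]

/-- The eigenvalues of a Hermitian matrix in decreasing order, extended by zero to a sequence
indexed by `ℕ`. -/
def hermitianEigenvalues {A : Matrix m m 𝕜} (hA : A.IsHermitian) : ℕ → ℝ :=
  sortedEigenvalues (isSymmetric_toEuclideanLin_iff.2 hA)

lemma hermitianEigenvalues_fin {A : Matrix m m 𝕜} (hA : A.IsHermitian)
    (i : Fin (Fintype.card m)) : hermitianEigenvalues hA i = hA.eigenvalues₀ i :=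
  sortedEigenvalues_of_lt _ finrank_euclideanSpace i.2

/-- The singular values of `A` in decreasing order, extended by zero to a sequence indexed by `ℕ`.
They are taken from the operator of `Aᴴ`, since `svSum` is built on `A * Aᴴ`. -/
def matrixSingularValues (A : Matrix m n 𝕜) : ℕ → ℝ :=
  (toEuclideanLin Aᴴ).singularValues

lemma matrixSingularValues_antitone (A : Matrix m n 𝕜) : Antitone (matrixSingularValues A) :=
  LinearMap.singularValues_antitone _

lemma matrixSingularValues_eq_zero (A : Matrix m n 𝕜) {i : ℕ} (hi : Fintype.card n ≤ i) :
    matrixSingularValues A i = 0 :=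
  singularValues_eq_zero_of_finrank_le _ (by rwa [finrank_euclideanSpace])

lemma adjoint_comp_self_toEuclideanLin_conjTranspose (A : Matrix m n 𝕜) :
    (toEuclideanLin Aᴴ).adjoint ∘ₗ toEuclideanLin Aᴴ = toEuclideanLin (A * Aᴴ) := by
  classical
  rw [← toEuclideanLin_conjTranspose_eq_adjoint, conjTranspose_conjTranspose]
  ext x : 1
  simp [toLpLin_apply]

lemma matrixSingularValues_eq_sqrt (A : Matrix m n 𝕜) (i : ℕ) : matrixSingularValues A i =
    √(hermitianEigenvalues (isHermitian_mul_conjTranspose_self A) i) := by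
  simp only [hermitianEigenvalues, ← adjoint_comp_self_toEuclideanLin_conjTranspose]
  rw [← sq_singularValues_eq_sortedEigenvalues, Real.sqrt_sq (LinearMap.singularValues_nonneg _ _)]
  rfl

lemma matrixSingularValues_congr {p : Type*} [Fintype p] {A : Matrix m n 𝕜} {B : Matrix m p 𝕜}
    (h : A * Aᴴ = B * Bᴴ) : matrixSingularValues A = matrixSingularValues B := by
  ext i
  simp only [matrixSingularValues_eq_sqrt, h]

lemma matrixSingularValues_sub_comm (A B : Matrix m n 𝕜) :
    matrixSingularValues (A - B) = matrixSingularValues (B - A) :=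
  matrixSingularValues_congr <| by
    rw [← neg_sub B A, conjTranspose_neg, Matrix.neg_mul, Matrix.mul_neg, neg_neg]

lemma matrixSingularValues_submatrix_id {p : Type*} [Fintype p] (A : Matrix m n 𝕜) (e : p ≃ n) :
    matrixSingularValues (A.submatrix id e) = matrixSingularValues A :=
  matrixSingularValues_congr <| by
    rw [conjTranspose_submatrix, submatrix_mul_equiv, submatrix_id_id]

lemma matrixSingularValues_add_le (A B : Matrix m n 𝕜) (i j : ℕ) :
    matrixSingularValues A (i + j) ≤ matrixSingularValues B i + matrixSingularValues (A - B) j := by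
  simpa only [matrixSingularValues, conjTranspose_sub, map_sub] using
    singularValues_add_le (toEuclideanLin Aᴴ) (toEuclideanLin Bᴴ) i j

lemma hermitianEigenvalues_add_le {A B : Matrix m m 𝕜} (hA : A.IsHermitian) (hB : B.IsHermitian)
    {i j : ℕ} (hij : i + j < Fintype.card m) :
    hermitianEigenvalues hA (i + j) ≤
      hermitianEigenvalues hB i + matrixSingularValues (A - B) j := by
  rw [matrixSingularValues, (hA.sub hB).eq, map_sub]
  exact sortedEigenvalues_add_le _ _ (by rwa [finrank_euclideanSpace])

lemma eigSum_eq_sum_range {A : Matrix m m ℂ} (hA : A.IsHermitian) (F : ℂ → ℂ) :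
    eigSum F A = ∑ i ∈ range (Fintype.card m), F (hermitianEigenvalues hA i) := by
  simp [eigSum, hA.roots_charpoly_eq_eigenvalues₀, sum_range, hermitianEigenvalues_fin,
    List.sum_ofFn]

lemma svSum_eq_sum_range (A : Matrix m n ℂ) (F : ℝ → ℂ) :
    svSum F A =
      ∑ i ∈ range (min (Fintype.card m) (Fintype.card n)), F (matrixSingularValues A i) := by
  have hall : ∑ i, F √((isHermitian_mul_conjTranspose_self A).eigenvalues i) =
      ∑ i ∈ range (Fintype.card m), F (matrixSingularValues A i) := by
    simp only [sum_range, matrixSingularValues_eq_sqrt, hermitianEigenvalues_fin]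
    exact Equiv.sum_comp (Fintype.equivOfCardEq (Fintype.card_fin _)).symm
      fun i => F √((isHermitian_mul_conjTranspose_self A).eigenvalues₀ i)
  have htail : ∑ i ∈ Ico (min (Fintype.card m) (Fintype.card n)) (Fintype.card m),
      F (matrixSingularValues A i) =
        (Fintype.card m - min (Fintype.card m) (Fintype.card n) : ℕ) * F 0 := by
    rw [sum_congr rfl fun i hi => by rw [matrixSingularValues_eq_zero A (by grind)], sum_const,
      Nat.card_Ico, nsmul_eq_mul]
  rw [svSum, hall, ← htail, sub_eq_iff_eq_add, sum_range_add_sum_Ico _ (min_le_left _ _)]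

lemma inv_mul_svSum_eq_empiricalMean (A : Matrix m n ℂ) (F : ℝ → ℂ) :
    ((min (Fintype.card m) (Fintype.card n) : ℕ) : ℂ)⁻¹ * svSum F A =
      empiricalMean (min (Fintype.card m) (Fintype.card n)) (matrixSingularValues A) F := by
  rw [svSum_eq_sum_range, empiricalMean, Complex.real_smul, Complex.ofReal_inv,
    Complex.ofReal_natCast]

lemma inv_mul_eigSum_eq_empiricalMean {A : Matrix m m ℂ} (hA : A.IsHermitian) (F : ℂ → ℂ) :
    (Fintype.card m : ℂ)⁻¹ * eigSum F A =
      empiricalMean (Fintype.card m) (hermitianEigenvalues hA) (fun x => F x) := by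
  rw [eigSum_eq_sum_range hA, empiricalMean, Complex.real_smul, Complex.ofReal_inv,
    Complex.ofReal_natCast]

end Fixed

section Sequences

variable {ι κ : ℕ → Type} [∀ n, Fintype (ι n)] [∀ n, Fintype (κ n)] [∀ n, DecidableEq (ι n)]

lemma DistributedSVConst.tendsto_empiricalMean {A : ∀ n, Matrix (ι n) (κ n) ℂ} {z : ℝ}
    (hA : DistributedSVConst z A) {F : ℝ → ℝ} (hF : Continuous F) (hFs : HasCompactSupport F) :
    Tendsto (fun n => empiricalMean (min (Fintype.card (ι n)) (Fintype.card (κ n)))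
      (matrixSingularValues (A n)) F) atTop (𝓝 (F z)) := by
  have hlim := hA (fun x => (F x : ℂ)) (by fun_prop)
    (hFs.comp_left (g := Complex.ofReal) Complex.ofReal_zero)
  simp only [inv_mul_svSum_eq_empiricalMean] at hlim
  simpa [Function.comp_def, empiricalMean] using (Complex.continuous_re.tendsto _).comp hlim

lemma DistributedSVConst.sub_comm {X Y : ∀ n, Matrix (ι n) (κ n) ℂ} {z : ℝ}
    (h : DistributedSVConst z fun n => X n - Y n) : DistributedSVConst z fun n => Y n - X n := by
  intro F hF hFs
  simpa only [inv_mul_svSum_eq_empiricalMean, matrixSingularValues_sub_comm (Y _)]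
    using h F hF hFs

lemma DistributedSVConst.shiftDominated_matrixSingularValues {X Y : ∀ n, Matrix (ι n) (κ n) ℂ}
    (h : DistributedSVConst 0 fun n => X n - Y n) :
    ShiftDominated atTop (fun n => min (Fintype.card (ι n)) (Fintype.card (κ n)))
      (fun n => matrixSingularValues (X n)) (fun n => matrixSingularValues (Y n)) :=
  shiftDominated_of_add_le (fun n => matrixSingularValues_antitone (X n - Y n))
    (fun _ => h.tendsto_empiricalMean)
    fun n i j _ => matrixSingularValues_add_le (X n) (Y n) i j

lemma DistributedSVConst.shiftDominated_hermitianEigenvalues {X Y : ∀ n, Matrix (ι n) (ι n) ℂ}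
    (hX : ∀ n, (X n).IsHermitian) (hY : ∀ n, (Y n).IsHermitian)
    (h : DistributedSVConst 0 fun n => X n - Y n) :
    ShiftDominated atTop (fun n => Fintype.card (ι n))
      (fun n => hermitianEigenvalues (hX n)) (fun n => hermitianEigenvalues (hY n)) :=
  shiftDominated_of_add_le (fun n => matrixSingularValues_antitone (X n - Y n))
    (fun _ hF hFs => by simpa only [min_self] using h.tendsto_empiricalMean hF hFs)
    fun n i j hij => hermitianEigenvalues_add_le (hX n) (hY n) hij

lemma DistributedSVConst.submatrix_id {A : ∀ n, Matrix (ι n) (κ n) ℂ} {z : ℝ}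
    (h : DistributedSVConst z A) {κ' : ℕ → Type} [∀ n, Fintype (κ' n)] (e : ∀ n, κ' n ≃ κ n) :
    DistributedSVConst z fun n => (A n).submatrix id (e n) := by
  refine fun F hF hFs => (h F hF hFs).congr fun n => ?_
  rw [inv_mul_svSum_eq_empiricalMean, inv_mul_svSum_eq_empiricalMean,
    matrixSingularValues_submatrix_id, Fintype.card_congr (e n)]

theorem DistributedSVConst.tendsto_svSum_sub {X Y : ∀ n, Matrix (ι n) (κ n) ℂ}
    (h : DistributedSVConst 0 fun n => X n - Y n) {F : ℝ → ℂ} (hF : Continuous F)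
    (hFs : HasCompactSupport F) :
    Tendsto (fun n =>
      ((min (Fintype.card (ι n)) (Fintype.card (κ n)) : ℕ) : ℂ)⁻¹ * svSum F (X n) -
        ((min (Fintype.card (ι n)) (Fintype.card (κ n)) : ℕ) : ℂ)⁻¹ * svSum F (Y n))
      atTop (𝓝 0) := by
  simpa only [inv_mul_svSum_eq_empiricalMean] using
    tendsto_empiricalMean_sub_of_hasCompactSupport h.shiftDominated_matrixSingularValues
      h.sub_comm.shiftDominated_matrixSingularValues hF hFs

theorem DistributedSVConst.tendsto_eigSum_sub {X Y : ∀ n, Matrix (ι n) (ι n) ℂ}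
    (hX : ∀ n, (X n).IsHermitian) (hY : ∀ n, (Y n).IsHermitian)
    (h : DistributedSVConst 0 fun n => X n - Y n) {F : ℂ → ℂ} (hF : Continuous F)
    (hFs : HasCompactSupport F) :
    Tendsto (fun n => (Fintype.card (ι n) : ℂ)⁻¹ * eigSum F (X n) -
      (Fintype.card (ι n) : ℂ)⁻¹ * eigSum F (Y n)) atTop (𝓝 0) := by
  simp only [inv_mul_eigSum_eq_empiricalMean (hX _), inv_mul_eigSum_eq_empiricalMean (hY _)]
  exact tendsto_empiricalMean_sub_of_hasCompactSupport
    (h.shiftDominated_hermitianEigenvalues hX hY)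
    (h.sub_comm.shiftDominated_hermitianEigenvalues hY hX)
    (hF.comp Complex.continuous_ofReal)
    (hFs.comp_isClosedEmbedding Complex.isometry_ofReal.isClosedEmbedding)

end Sequences

section Symbols

variable {Θ : Type*} [MeasureSpace Θ] {Ω : Set Θ}

lemma distributedSV_congr {ρ τ : Type*} [Fintype ρ] [Fintype τ] [DecidableEq ρ]
    {f : Θ → Matrix ρ τ ℂ} {ι κ : ℕ → Type} [∀ n, Fintype (ι n)] [∀ n, Fintype (κ n)]
    [∀ n, DecidableEq (ι n)] {X Y : ∀ n, Matrix (ι n) (κ n) ℂ}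
    (h : ∀ F : ℝ → ℂ, Continuous F → HasCompactSupport F → Tendsto (fun n =>
      ((min (Fintype.card (ι n)) (Fintype.card (κ n)) : ℕ) : ℂ)⁻¹ * svSum F (X n) -
        ((min (Fintype.card (ι n)) (Fintype.card (κ n)) : ℕ) : ℂ)⁻¹ * svSum F (Y n))
      atTop (𝓝 0)) :
    DistributedSV Ω f X ↔ DistributedSV Ω f Y :=
  forall₃_congr fun F hF hFs => tendsto_iff_of_dist <| by
    simpa only [dist_eq_norm, norm_zero] using (h F hF hFs).norm

lemma distributedEig_congr {ρ : Type*} [Fintype ρ] [DecidableEq ρ] {f : Θ → Matrix ρ ρ ℂ}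
    {ι : ℕ → Type} [∀ n, Fintype (ι n)] [∀ n, DecidableEq (ι n)]
    {X Y : ∀ n, Matrix (ι n) (ι n) ℂ}
    (h : ∀ F : ℂ → ℂ, Continuous F → HasCompactSupport F → Tendsto (fun n =>
      (Fintype.card (ι n) : ℂ)⁻¹ * eigSum F (X n) -
        (Fintype.card (ι n) : ℂ)⁻¹ * eigSum F (Y n)) atTop (𝓝 0)) :
    DistributedEig Ω f X ↔ DistributedEig Ω f Y :=
  forall₃_congr fun F hF hFs => tendsto_iff_of_dist <| by
    simpa only [dist_eq_norm, norm_zero] using (h F hF hFs).norm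

end Symbols

end Matrices

theorem zero_distributed_difference_same_symbol_general
    {ι κ : ℕ → Type} [∀ n, Fintype (ι n)] [∀ n, Fintype (κ n)] [∀ n, DecidableEq (ι n)]
    {X Y : ∀ n, Matrix (ι n) (κ n) ℂ} (hdiff : DistributedSVConst 0 (fun n => X n - Y n)) :
    (∀ F : ℝ → ℂ, Continuous F → HasCompactSupport F → Tendsto (fun n =>
      ((min (Fintype.card (ι n)) (Fintype.card (κ n)) : ℕ) : ℂ)⁻¹ * svSum F (X n) -
        ((min (Fintype.card (ι n)) (Fintype.card (κ n)) : ℕ) : ℂ)⁻¹ * svSum F (Y n))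
      atTop (𝓝 0)) ∧
    (∀ e : ∀ n, κ n ≃ ι n,
      (∀ n, ((X n).submatrix id (e n).symm).IsHermitian) →
      (∀ n, ((Y n).submatrix id (e n).symm).IsHermitian) →
      ∀ F : ℂ → ℂ, Continuous F → HasCompactSupport F → Tendsto (fun n =>
        (Fintype.card (ι n) : ℂ)⁻¹ * eigSum F ((X n).submatrix id (e n).symm) -
          (Fintype.card (ι n) : ℂ)⁻¹ * eigSum F ((Y n).submatrix id (e n).symm))
        atTop (𝓝 0)) :=
  ⟨fun _ hF hFs => hdiff.tendsto_svSum_sub hF hFs, fun e hX hY _ hF hFs =>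
    DistributedSVConst.tendsto_eigSum_sub hX hY (hdiff.submatrix_id fun n => (e n).symm) hF hFs⟩

/-- if two matrix-sequences `{X_n}_n`, `{Y_n}_n` of the same sizes
(`d_n × e_n`, `min{d_n,e_n} → ∞`) have zero-distributed difference
`{X_n − Y_n}_n ∼_σ 0`, then for any measurable symbol `G`:
`{X_n}_n ∼_σ G` iff `{Y_n}_n ∼_σ G`; and if all matrices are Hermitian, also
`{X_n}_n ∼_λ G` iff `{Y_n}_n ∼_λ G`. -/
theorem zero_distributed_difference_same_symbol
    (d e : ℕ → ℕ)
    (hmin : Tendsto (fun n => min (d n) (e n)) atTop atTop)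
    (X Y : ∀ n, Matrix (Fin (d n)) (Fin (e n)) ℂ)
    (hdiff : DistributedSVConst 0 (fun n => X n - Y n)) :
    (∀ (l s t : ℕ) (Ω : Set (Fin l → ℝ)), MeasurableSet Ω →
      0 < volume Ω → volume Ω < ⊤ →
      ∀ G : (Fin l → ℝ) → Matrix (Fin s) (Fin t) ℂ,
        (∀ a b, Measurable fun θ => G θ a b) →
        (DistributedSV Ω G X ↔ DistributedSV Ω G Y)) ∧
    (∀ (hde : ∀ n, e n = d n),
      (∀ n, ((X n).submatrix id (Fin.cast (hde n).symm)).IsHermitian) →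
      (∀ n, ((Y n).submatrix id (Fin.cast (hde n).symm)).IsHermitian) →
      ∀ (l s : ℕ) (Ω : Set (Fin l → ℝ)), MeasurableSet Ω →
        0 < volume Ω → volume Ω < ⊤ →
        ∀ G : (Fin l → ℝ) → Matrix (Fin s) (Fin s) ℂ,
          (∀ a b, Measurable fun θ => G θ a b) →
          (DistributedEig Ω G (fun n => (X n).submatrix id (Fin.cast (hde n).symm)) ↔
            DistributedEig Ω G (fun n => (Y n).submatrix id (Fin.cast (hde n).symm)))) := by
  obtain ⟨hsv, heig⟩ := zero_distributed_difference_same_symbol_general hdiff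
  exact ⟨fun _ _ _ _ _ _ _ _ _ => distributedSV_congr hsv, fun hde hX hY _ _ _ _ _ _ _ _ =>
    distributedEig_congr (heig (fun n => finCongr (hde n)) hX hY)⟩

end
end
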